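/- There exists an absolute constant K such that for every continuous strictly convex function f : ℝ → ℝ and every finite set A ⊂ ℝ with |A| ≥ 2, one has max(|f(A)+f(A)|, |A−A|) ≥ K · |A|^{14/11} / (log|A|)^{2/11}. -/

import Mathlib

open Finset Pointwise

noncomputable def dlt (X Y : Finset ℝ) (s : ℝ) : ℕ :=
  ((X ×ˢ Y).filter (fun p => p.1 - p.2 = s)).card

noncomputable def sg (X Y : Finset ℝ) (s : ℝ) : ℕ :=
  ((X ×ˢ Y).filter (fun p => p.1 + p.2 = s)).card

noncomputable def En (X Y : Finset ℝ) : ℝ :=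
  ∑ s ∈ X - X, (dlt X X s : ℝ) * (dlt Y Y s : ℝ)

noncomputable def E3 (X : Finset ℝ) : ℝ :=
  ∑ s ∈ X - X, (dlt X X s : ℝ) ^ 3

noncomputable def E15 (X : Finset ℝ) : ℝ :=
  ∑ s ∈ X - X, (dlt X X s : ℝ) ^ ((3 : ℝ) / 2)

theorem exists_monotone_blocks (X : Finset ℝ) {s : ℕ} (hs : 1 ≤ s) (hsX : s ≤ #X) :
    ∃ u : ℝ → ℕ, Monotone u ∧ (∀ x ∈ X, u x < s) ∧
      ∀ i, s * #{x ∈ X | u x = i} ≤ 2 * #X := by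
  set q := (#X + s - 1) / s with hq
  have hsq : s * q ≤ 2 * #X := (Nat.mul_div_le _ _).trans (by omega)
  have hqX : #X ≤ q * s := by
    have hlt := Nat.mod_lt (#X + s - 1) hs
    have := Nat.div_add_mod (#X + s - 1) s
    rw [← hq] at this
    rw [mul_comm]
    omega
  have hq0 : 0 < q := by
    refine Nat.pos_of_ne_zero fun h => ?_
    rw [h, zero_mul] at hqX
    omega
  have hrk : ∀ x ∈ X, ∀ y, x < y → #{z ∈ X | z < x} < #{z ∈ X | z < y} := by
    intro x hx y hxy
    refine card_lt_card ⟨fun z hz => ?_, fun h => ?_⟩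
    · simp only [mem_filter] at hz ⊢
      exact ⟨hz.1, hz.2.trans hxy⟩
    · have := h (mem_filter.2 ⟨hx, hxy⟩)
      simp at this
  refine ⟨fun x => #{z ∈ X | z < x} / q, fun x y hxy => ?_, fun x hx => ?_, fun i => ?_⟩
  · refine Nat.div_le_div_right (card_le_card fun z hz => ?_)
    simp only [mem_filter] at hz ⊢
    exact ⟨hz.1, hz.2.trans_le hxy⟩
  · refine (Nat.div_lt_iff_lt_mul hq0).2 (lt_of_lt_of_le (card_lt_card ⟨filter_subset _ _, ?_⟩) (by linarith))
    intro h
    have := h hx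
    simp at this
  · refine le_trans (Nat.mul_le_mul_left _ ?_) hsq
    have hcard : #(Ico (i * q) (i * q + q)) = q := by simp
    refine le_of_le_of_eq ?_ hcard
    refine card_le_card_of_injOn (fun x => #{z ∈ X | z < x}) (fun x hx => ?_) fun x hx y hy hxy => ?_
    · simp only [coe_filter, Set.mem_ofPred_eq] at hx
      simp only [coe_Ico, Set.mem_Ico]
      have h1 := Nat.div_add_mod #{z ∈ X | z < x} q
      have h2 := Nat.mod_lt #{z ∈ X | z < x} hq0
      rw [hx.2, mul_comm] at h1
      omega
    · simp only [coe_filter, Set.mem_ofPred_eq] at hx hy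
      rcases lt_trichotomy x y with h | h | h
      · exact absurd hxy (hrk x hx.1 y h).ne
      · exact h
      · exact absurd hxy (hrk y hy.1 x h).ne'

theorem card_image_pair_le_of_monotoneOn {S : Finset ℝ} {a b : ℝ → ℕ} {s : ℕ}
    (ha : MonotoneOn a S) (hb : MonotoneOn b S) (has : ∀ x ∈ S, a x < s) (hbs : ∀ x ∈ S, b x < s) :
    #(S.image fun x => (a x, b x)) ≤ 2 * s := by
  rw [← card_range (2 * s)]
  refine card_le_card_of_injOn (fun p => p.1 + p.2) (fun p hp => ?_) fun p hp p' hp' h => ?_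
  · obtain ⟨x, hx, rfl⟩ := by simpa using hp
    have := has x hx
    have := hbs x hx
    simp
    omega
  · obtain ⟨x, hx, rfl⟩ := by simpa using hp
    obtain ⟨y, hy, rfl⟩ := by simpa using hp'
    simp only [Prod.mk.injEq] at h ⊢
    rcases le_total x y with hxy | hxy
    · have := ha hx hy hxy
      have := hb hx hy hxy
      omega
    · have := ha hy hx hxy
      have := hb hy hx hxy
      omega

theorem card_image_pair_le_of_antitoneOn {S : Finset ℝ} {a b : ℝ → ℕ} {s : ℕ}
    (ha : MonotoneOn a S) (hb : AntitoneOn b S) (has : ∀ x ∈ S, a x < s) (hbs : ∀ x ∈ S, b x < s) :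
    #(S.image fun x => (a x, b x)) ≤ 2 * s := by
  have h : (S.image fun x => (a x, b x)) =
      (S.image fun x => (a x, s - 1 - b x)).image fun p => (p.1, s - 1 - p.2) := by
    rw [image_image]
    refine image_congr fun x hx => ?_
    have := hbs x hx
    simp only [Function.comp_apply, Prod.mk.injEq, true_and]
    omega
  rw [h]
  refine card_image_le.trans (card_image_pair_le_of_monotoneOn ha (fun x hx y hy hxy => ?_) has
    fun x hx => ?_)
  · have := hb hx hy hxy
    omega
  · have := has x hx
    omega

/-- A convex curve meets few cells of a grid. -/
theorem ConvexOn.card_cells_le {g : ℝ → ℝ} (hg : ConvexOn ℝ Set.univ g) {S : Finset ℝ}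
    {u v : ℝ → ℕ} (hu : Monotone u) (hv : Monotone v) {s : ℕ} (hus : ∀ x ∈ S, u x < s)
    (hvs : ∀ x ∈ S, v (g x) < s) :
    #(S.image fun x => (u x, v (g x))) ≤ 4 * s := by
  rcases S.eq_empty_or_nonempty with rfl | hS
  · simp
  obtain ⟨x₀, hx₀, hmin⟩ := S.exists_min_image g hS
  have hsplit : S = {x ∈ S | x₀ ≤ x} ∪ {x ∈ S | x ≤ x₀} := by
    ext x
    simp only [mem_union, mem_filter]
    have := le_total x₀ x
    tauto
  rw [hsplit, image_union]
  refine (card_union_le _ _).trans ?_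
  have h1 : #(({x ∈ S | x₀ ≤ x} : Finset ℝ).image fun x => (u x, v (g x))) ≤ 2 * s := by
    refine card_image_pair_le_of_monotoneOn (hu.monotoneOn _) (fun x hx y hy hxy => hv ?_)
      (fun x hx => hus x (mem_filter.1 hx).1) (fun x hx => hvs x (mem_filter.1 hx).1)
    simp only [coe_filter, Set.mem_ofPred_eq] at hx hy
    have := hg.le_max_of_mem_Icc (Set.mem_univ x₀) (Set.mem_univ y) ⟨hx.2, hxy⟩
    rwa [max_eq_right (hmin y hy.1)] at this
  have h2 : #(({x ∈ S | x ≤ x₀} : Finset ℝ).image fun x => (u x, v (g x))) ≤ 2 * s := by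
    refine card_image_pair_le_of_antitoneOn (hu.monotoneOn _) (fun x hx y hy hxy => hv ?_)
      (fun x hx => hus x (mem_filter.1 hx).1) (fun x hx => hvs x (mem_filter.1 hx).1)
    simp only [coe_filter, Set.mem_ofPred_eq] at hx hy
    have := hg.le_max_of_mem_Icc (Set.mem_univ x) (Set.mem_univ x₀) ⟨hxy, hy.2⟩
    rwa [max_eq_left (hmin x hx.1)] at this
  omega

theorem card_le_card_image_add_card_collisions {α β : Type*} [DecidableEq α] [DecidableEq β]
    (S : Finset α) (φ : α → β) :
    #S ≤ #(S.image φ) + #{p ∈ S ×ˢ S | p.1 ≠ p.2 ∧ φ p.1 = φ p.2} := by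
  rcases S.eq_empty_or_nonempty with rfl | hS
  · simp
  obtain ⟨a₀, -⟩ := hS
  have : Nonempty α := ⟨a₀⟩
  have hr : ∀ x ∈ S, Function.invFunOn φ S (φ x) ∈ S ∧ φ (Function.invFunOn φ S (φ x)) = φ x :=
    fun x hx => Function.invFunOn_pos ⟨x, hx, rfl⟩
  set r := Function.invFunOn φ S
  rw [← card_filter_add_card_filter_not (fun x => r (φ x) = x)]
  refine add_le_add (card_le_card_of_injOn φ (fun x hx => ?_) fun x hx y hy h => ?_)
    (card_le_card_of_injOn (fun x => (x, r (φ x))) (fun x hx => ?_) fun x hx y hy h => ?_)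
  · simp only [coe_filter, Set.mem_ofPred_eq] at hx
    exact mem_image_of_mem _ hx.1
  · simp only [coe_filter, Set.mem_ofPred_eq] at hx hy
    rw [← hx.2, ← hy.2, h]
  · simp only [coe_filter, Set.mem_ofPred_eq] at hx
    simp only [coe_filter, mem_product, Set.mem_ofPred_eq]
    exact ⟨⟨hx.1, (hr x hx.1).1⟩, Ne.symm hx.2, (hr x hx.1).2.symm⟩
  · exact (Prod.mk.inj h).1

theorem StrictConvexOn.sub_strictMono {f : ℝ → ℝ} (hf : StrictConvexOn ℝ Set.univ f) {h : ℝ}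
    (hh : 0 < h) : StrictMono fun x => f (x + h) - f x := by
  intro p q hpq
  have hd : 0 < q + h - p := by linarith
  have ha : 0 < h / (q + h - p) := by positivity
  have hb : 0 < (q - p) / (q + h - p) := div_pos (by linarith) hd
  have hab : h / (q + h - p) + (q - p) / (q + h - p) = 1 := by field_simp; ring
  have hne : p ≠ q + h := by linarith
  have h1 := hf.2 (Set.mem_univ p) (Set.mem_univ (q + h)) hne ha hb hab
  have h2 := hf.2 (Set.mem_univ p) (Set.mem_univ (q + h)) hne hb ha (by linarith)
  simp only [smul_eq_mul] at h1 h2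
  rw [show h / (q + h - p) * p + (q - p) / (q + h - p) * (q + h) = q by field_simp; ring] at h1
  rw [show (q - p) / (q + h - p) * p + h / (q + h - p) * (q + h) = p + h by
    field_simp; ring] at h2
  have h3 := congrArg (· * (f p + f (q + h))) hab
  simp only at h3 ⊢
  linarith

theorem StrictConvexOn.translate_unique {f : ℝ → ℝ} (hf : StrictConvexOn ℝ Set.univ f)
    {x x' b b' c c' : ℝ} (hx : x ≠ x') (h : f (x + b) + c = f (x + b') + c')
    (h' : f (x' + b) + c = f (x' + b') + c') : b = b' ∧ c = c' := by
  have hb : b = b' := by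
    wlog hlt : x < x' generalizing x x'
    · exact this hx.symm h' h (lt_of_le_of_ne (not_lt.1 hlt) hx.symm)
    have := (hf.sub_strictMono (sub_pos.2 hlt)).injective.eq_iff (a := x + b) (b := x + b')
    rw [show x + b + (x' - x) = x' + b by ring, show x + b' + (x' - x) = x' + b' by ring] at this
    linarith [this.1 (by linarith)]
  subst hb
  exact ⟨rfl, by linarith⟩

theorem StrictConvexOn.card_le_two_mul_card_image {f : ℝ → ℝ} (hf : StrictConvexOn ℝ Set.univ f)
    (A : Finset ℝ) : #A ≤ 2 * #(A.image f) := by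
  refine card_le_mul_card_image _ _ fun y _ => ?_
  have key : ∀ a b c : ℝ, a < b → b < c → f a = y → f b = y → f c = y → False := by
    intro a b c hab hbc ha hb hc
    have := hf.lt_on_openSegment (Set.mem_univ a) (Set.mem_univ c) (hab.trans hbc).ne
      (z := b) (by rw [openSegment_eq_Ioo (hab.trans hbc)]; exact ⟨hab, hbc⟩)
    simp [ha, hb, hc] at this
  by_contra! h
  obtain ⟨a, b, c, ha, hb, hc, hab, hac, hbc⟩ := two_lt_card_iff.1 h
  simp only [mem_filter] at ha hb hc
  rcases hab.lt_or_gt with h1 | h1 <;> rcases hac.lt_or_gt with h2 | h2 <;>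
    rcases hbc.lt_or_gt with h3 | h3
  · exact key a b c h1 h3 ha.2 hb.2 hc.2
  · exact key a c b h2 h3 ha.2 hc.2 hb.2
  · exact h1.not_gt (h3.trans h2)
  · exact key c a b h2 h1 hc.2 ha.2 hb.2
  · exact key b a c h1 h2 hb.2 ha.2 hc.2
  · exact h1.not_gt (h2.trans h3)
  · exact key b c a h3 h2 hb.2 hc.2 ha.2
  · exact key c b a h3 h1 hc.2 hb.2 ha.2

theorem mul_card_filter_eq_le {X : Finset ℝ} {u : ℝ → ℕ} {s k : ℕ}
    (hu : ∀ i, s * #{x ∈ X | u x = i} ≤ k) :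
    s * #{p ∈ X ×ˢ X | u p.1 = u p.2} ≤ k * #X := by
  have h : #{p ∈ X ×ˢ X | u p.1 = u p.2} = ∑ x ∈ X, #{x' ∈ X | u x' = u x} := by
    simp only [card_filter, sum_product, eq_comm]
  rw [h, mul_sum, mul_comm k]
  exact sum_le_card_nsmul _ _ _ fun x _ => hu (u x)

/-- Incidences between a Cartesian product and the translates of a strictly convex curve. -/
theorem StrictConvexOn.card_incidences_le {f : ℝ → ℝ} (hf : StrictConvexOn ℝ Set.univ f)
    (B C X Y : Finset ℝ) {s : ℕ} (hs : 1 ≤ s) (hsX : s ≤ #X) (hsY : s ≤ #Y) :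
    s ^ 2 * ∑ ℓ ∈ B ×ˢ C, #{x ∈ X | f (x + ℓ.1) + ℓ.2 ∈ Y} ≤
      4 * s ^ 3 * (#B * #C) + 4 * (#X * #Y) ^ 2 := by
  obtain ⟨u, hu, hus, huc⟩ := exists_monotone_blocks X hs hsX
  obtain ⟨v, hv, hvs, hvc⟩ := exists_monotone_blocks Y hs hsY
  set S : ℝ × ℝ → Finset ℝ := fun ℓ => {x ∈ X | f (x + ℓ.1) + ℓ.2 ∈ Y} with hS
  set φ : ℝ × ℝ → ℝ → ℕ × ℕ := fun ℓ x => (u x, v (f (x + ℓ.1) + ℓ.2)) with hφ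
  set Q : ℝ × ℝ → Finset (ℝ × ℝ) := fun ℓ =>
    {p ∈ S ℓ ×ˢ S ℓ | p.1 ≠ p.2 ∧ φ ℓ p.1 = φ ℓ p.2} with hQ
  have hcell : ∀ ℓ, #((S ℓ).image (φ ℓ)) ≤ 4 * s := fun ℓ => by
    have hconv : ConvexOn ℝ Set.univ fun x => f (x + ℓ.1) + ℓ.2 := by
      have := (hf.convexOn.translate_left ℓ.1).add_const ℓ.2
      simpa [Function.comp_def, Pi.add_def] using this
    refine hconv.card_cells_le hu hv (fun x hx => hus x (mem_filter.1 hx).1)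
      fun x hx => hvs _ (mem_filter.1 hx).2
  have h1 : ∑ ℓ ∈ B ×ˢ C, #(S ℓ) ≤ #B * #C * (4 * s) + ∑ ℓ ∈ B ×ˢ C, #(Q ℓ) := by
    rw [← card_product, ← smul_eq_mul, ← sum_const, ← sum_add_distrib]
    exact sum_le_sum fun ℓ _ => (card_le_card_image_add_card_collisions (S ℓ) (φ ℓ)).trans
      (Nat.add_le_add_right (hcell ℓ) _)
  have h2 : ∑ ℓ ∈ B ×ˢ C, #(Q ℓ) ≤
      #{p ∈ X ×ˢ X | u p.1 = u p.2} * #{p ∈ Y ×ˢ Y | v p.1 = v p.2} := by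
    rw [← card_sigma, ← card_product]
    refine card_le_card_of_injOn
      (fun z => (z.2, (f (z.2.1 + z.1.1) + z.1.2, f (z.2.2 + z.1.1) + z.1.2)))
      (fun z hz => ?_) fun z hz w hw h => ?_
    · simp only [hQ, hS, hφ, coe_sigma, Set.mem_sigma_iff, mem_coe, mem_filter, mem_product,
        Prod.mk.injEq] at hz
      simp only [mem_coe, mem_filter, mem_product]
      tauto
    · obtain ⟨⟨b, c⟩, ⟨x, x'⟩⟩ := z
      obtain ⟨⟨b', c'⟩, ⟨y, y'⟩⟩ := w
      simp only [hQ, coe_sigma, Set.mem_sigma_iff, mem_coe, mem_filter] at hz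
      simp only [Prod.mk.injEq] at h
      obtain ⟨⟨rfl, rfl⟩, h3, h4⟩ := h
      obtain ⟨rfl, rfl⟩ := hf.translate_unique hz.2.2.1 h3 h4
      rfl
  have h3 := mul_card_filter_eq_le huc
  have h4 := mul_card_filter_eq_le hvc
  calc s ^ 2 * ∑ ℓ ∈ B ×ˢ C, #(S ℓ)
      ≤ s ^ 2 * (#B * #C * (4 * s) +
        #{p ∈ X ×ˢ X | u p.1 = u p.2} * #{p ∈ Y ×ˢ Y | v p.1 = v p.2}) :=
        Nat.mul_le_mul_left _ (h1.trans (Nat.add_le_add_left h2 _))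
    _ = 4 * s ^ 3 * (#B * #C) + (s * #{p ∈ X ×ˢ X | u p.1 = u p.2}) *
        (s * #{p ∈ Y ×ˢ Y | v p.1 = v p.2}) := by ring
    _ ≤ 4 * s ^ 3 * (#B * #C) + (2 * #X * #X) * (2 * #Y * #Y) := by gcongr
    _ = _ := by ring

theorem dlt_eq_card_filter_right (A B : Finset ℝ) (x : ℝ) : dlt A B x = #{b ∈ B | x + b ∈ A} := by
  refine card_nbij' (fun p => p.2) (fun b => (x + b, b)) ?_ ?_ ?_ ?_
  · rintro ⟨a, b⟩ h
    simp only [mem_coe, mem_filter, mem_product] at h ⊢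
    rw [← h.2]
    simpa using h.1.symm
  · intro b h
    simp only [mem_coe, mem_filter, mem_product] at h ⊢
    simpa using h.symm
  · rintro ⟨a, b⟩ h
    simp only [mem_coe, mem_filter, mem_product] at h ⊢
    simp [← h.2]
  · intro b h
    rfl

theorem dlt_eq_card_filter_left (A B : Finset ℝ) (x : ℝ) : dlt A B x = #{a ∈ A | a - x ∈ B} := by
  refine card_nbij' (fun p => p.1) (fun a => (a, a - x)) ?_ ?_ ?_ ?_
  · rintro ⟨a, b⟩ h
    simp only [mem_coe, mem_filter, mem_product] at h ⊢
    rw [← h.2]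
    simpa using h.1
  · intro b h
    simp only [mem_coe, mem_filter, mem_product] at h ⊢
    simpa using h
  · rintro ⟨a, b⟩ h
    simp only [mem_coe, mem_filter, mem_product] at h ⊢
    simp [← h.2]
  · intro b h
    rfl

theorem dlt_le_card_left (A B : Finset ℝ) (x : ℝ) : dlt A B x ≤ #A :=
  (dlt_eq_card_filter_left A B x).trans_le (card_filter_le _ _)

theorem dlt_le_card_right (A B : Finset ℝ) (x : ℝ) : dlt A B x ≤ #B :=
  (dlt_eq_card_filter_right A B x).trans_le (card_filter_le _ _)

theorem sum_dlt (A B : Finset ℝ) : ∑ x ∈ A - B, dlt A B x = #A * #B := by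
  rw [← card_product]
  exact (card_eq_sum_card_fiberwise fun p hp => by
    have := mem_product.1 hp
    exact sub_mem_sub this.1 this.2).symm

theorem mul_card_le_card_translate_incidences (f : ℝ → ℝ) (A B C X : Finset ℝ) {τ : ℕ}
    (hX : ∀ x ∈ X, τ ≤ dlt A B x) :
    #X * (τ * #C) ≤ ∑ ℓ ∈ B ×ˢ C, #{x ∈ X | f (x + ℓ.1) + ℓ.2 ∈ A.image f + C} := by
  have h : ∑ ℓ ∈ B ×ˢ C, #{x ∈ X | f (x + ℓ.1) + ℓ.2 ∈ A.image f + C} =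
      ∑ x ∈ X, #{ℓ ∈ B ×ˢ C | f (x + ℓ.1) + ℓ.2 ∈ A.image f + C} := by
    simp only [card_filter]
    exact sum_comm
  rw [h]
  refine card_nsmul_le_sum _ _ _ fun x hx => ?_
  have hxτ := hX x hx
  rw [dlt_eq_card_filter_right] at hxτ
  refine (Nat.mul_le_mul_right _ hxτ).trans ?_
  rw [← card_product]
  refine card_le_card fun ℓ hℓ => ?_
  simp only [mem_filter, mem_product] at hℓ ⊢
  exact ⟨⟨hℓ.1.1, hℓ.2⟩, add_mem_add (mem_image_of_mem _ hℓ.1.2) hℓ.2⟩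

theorem StrictConvexOn.card_popular_le {f : ℝ → ℝ} (hf : StrictConvexOn ℝ Set.univ f)
    {A B C : Finset ℝ} (hA : A.Nonempty) (hC : C.Nonempty) {τ : ℕ} :
    #{x ∈ A - B | τ ≤ dlt A B x} * τ ^ 3 * #C ≤ 2048 * (#(A.image f + C) * #B) ^ 2 := by
  set X := {x ∈ A - B | τ ≤ dlt A B x}
  have hX : ∀ x ∈ X, τ ≤ dlt A B x := fun x hx => (mem_filter.1 hx).2
  rcases X.eq_empty_or_nonempty with hXe | ⟨x₀, hx₀⟩
  · simp [hXe]
  have hτA : τ ≤ #A := (hX x₀ hx₀).trans (dlt_le_card_left _ _ _)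
  have hτB : τ ≤ #B := (hX x₀ hx₀).trans (dlt_le_card_right _ _ _)
  have hAF : #A ≤ 2 * #(A.image f + C) :=
    (hf.card_le_two_mul_card_image A).trans
      (Nat.mul_le_mul_left _ (card_le_card_add_right hC))
  have hCF : #C ≤ #(A.image f + C) := card_le_card_add_left (hA.image f)
  have hXτ : #X * τ ≤ #A * #B := by
    rw [← sum_dlt]
    exact (card_nsmul_le_sum X _ _ hX).trans
      (sum_le_sum_of_subset (filter_subset _ _))
  set F := #(A.image f + C)
  rcases lt_or_ge (#X * τ) (8 * #B) with hlt | hge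
  · calc #X * τ ^ 3 * #C = (#X * τ) * τ * τ * #C := by ring
      _ ≤ (8 * #B) * #B * (2 * F) * F := by gcongr; exact hτA.trans hAF
      _ = 16 * (F * #B) ^ 2 := by ring
      _ ≤ _ := by gcongr; norm_num
  rcases Nat.eq_zero_or_pos (#B) with hB | hB
  · have : τ = 0 := by omega
    simp [this]
  set s := #X * τ / (8 * #B) with hs
  have hs1 : 1 ≤ s := (Nat.one_le_div_iff (by omega)).2 hge
  have hsle : s * (8 * #B) ≤ #X * τ := Nat.div_mul_le_self _ _
  have hsge : #X * τ ≤ s * (16 * #B) := by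
    have h1 := Nat.lt_div_mul_add (a := #X * τ) (b := 8 * #B) (by omega)
    rw [← hs] at h1
    nlinarith
  have hsX : s ≤ #X := by
    refine Nat.le_of_mul_le_mul_right (c := 8 * #B) (hsle.trans ?_) (by omega)
    gcongr
    omega
  have hsF : s ≤ F := by
    refine Nat.le_of_mul_le_mul_right (c := 8 * #B) (hsle.trans ?_) (by omega)
    refine hXτ.trans ?_
    nlinarith
  have h1 := hf.card_incidences_le B C X (A.image f + C) hs1 hsX hsF
  have h2 := mul_card_le_card_translate_incidences f A B C X hX
  have h3 : s ^ 2 * (#X * (τ * #C)) ≤ 8 * (#X * F) ^ 2 := by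
    have h4 := (Nat.mul_le_mul_left (s ^ 2) h2).trans h1
    have h5 : 8 * s ^ 3 * (#B * #C) ≤ s ^ 2 * (#X * (τ * #C)) := by
      calc 8 * s ^ 3 * (#B * #C) = s ^ 2 * #C * (s * (8 * #B)) := by ring
        _ ≤ s ^ 2 * #C * (#X * τ) := by gcongr
        _ = _ := by ring
    linarith
  have hXpos : 0 < #X := card_pos.2 ⟨x₀, hx₀⟩
  refine Nat.le_of_mul_le_mul_left (c := #X ^ 2) ?_ (by positivity)
  calc #X ^ 2 * (#X * τ ^ 3 * #C) = (#X * τ) ^ 2 * (#X * (τ * #C)) := by ring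
    _ ≤ (s * (16 * #B)) ^ 2 * (#X * (τ * #C)) := by gcongr
    _ = 256 * #B ^ 2 * (s ^ 2 * (#X * (τ * #C))) := by ring
    _ ≤ 256 * #B ^ 2 * (8 * (#X * F) ^ 2) := by gcongr
    _ = _ := by ring

theorem sum_sum_indicator_le {ι : Type*} (X : Finset ι) (r : ι → ℕ) (I : Finset ℕ) (w : ℕ → ℝ) :
    ∑ x ∈ X, ∑ τ ∈ I with τ ≤ r x, w τ = ∑ τ ∈ I, w τ * #{x ∈ X | τ ≤ r x} := by
  simp only [sum_filter, card_filter, Nat.cast_sum, mul_sum]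
  rw [sum_comm]
  simp

theorem sum_cube_le_of_card_le {ι : Type*} (X : Finset ι) (r : ι → ℕ) {n : ℕ} {M : ℝ}
    (hr : ∀ x ∈ X, r x ≤ n) (hM : ∀ τ : ℕ, (#{x ∈ X | τ ≤ r x} : ℝ) * τ ^ 3 ≤ M) :
    ∑ x ∈ X, (r x : ℝ) ^ 3 ≤ 3 * M * (1 + Real.log n) := by
  have hcube : ∀ m : ℕ, (m : ℝ) ^ 3 ≤ ∑ τ ∈ Icc 1 m, 3 * (τ : ℝ) ^ 2 := fun m => by
    induction m with
    | zero => simp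
    | succ m ih =>
      rw [sum_Icc_succ_top (by omega)]
      push_cast
      nlinarith [(Nat.cast_nonneg m : (0 : ℝ) ≤ m)]
  have hM0 : 0 ≤ M := by simpa using hM 0
  calc ∑ x ∈ X, (r x : ℝ) ^ 3 ≤ ∑ x ∈ X, ∑ τ ∈ Icc 1 n with τ ≤ r x, 3 * (τ : ℝ) ^ 2 := by
        refine sum_le_sum fun x hx => (hcube _).trans_eq (sum_congr ?_ fun _ _ => rfl)
        ext τ
        have := hr x hx
        simp only [mem_Icc, mem_filter]
        omega
    _ = ∑ τ ∈ Icc 1 n, 3 * (τ : ℝ) ^ 2 * #{x ∈ X | τ ≤ r x} := sum_sum_indicator_le _ _ _ _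
    _ ≤ ∑ τ ∈ Icc 1 n, 3 * M * (τ : ℝ)⁻¹ := by
        refine sum_le_sum fun τ hτ => ?_
        have : (0 : ℝ) < τ := by
          have := (mem_Icc.1 hτ).1
          positivity
        have := hM τ
        rw [← div_eq_mul_inv, le_div_iff₀ (by assumption)]
        linarith
    _ = 3 * M * (harmonic n : ℝ) := by
        rw [← mul_sum, harmonic_eq_sum_Icc]
        push_cast
        rfl
    _ ≤ _ := by
        gcongr
        exact harmonic_le_one_add_log n

theorem sum_sq_le_of_card_le {ι : Type*} (X : Finset ι) (r : ι → ℕ) {M : ℝ}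
    (hM : ∀ τ : ℕ, (#{x ∈ X | τ ≤ r x} : ℝ) * τ ^ 3 ≤ M) {T : ℕ} (hT : 1 ≤ T) :
    ∑ x ∈ X, (r x : ℝ) ^ 2 ≤ T * ∑ x ∈ X, (r x : ℝ) + 2 * M / T := by
  have hsq : ∀ m : ℕ, (m : ℝ) ^ 2 ≤ T * m + ∑ τ ∈ Ioc T m, 2 * (τ : ℝ) := fun m => by
    rcases le_total m T with h | h
    · rw [Ioc_eq_empty_of_le h, sum_empty, add_zero, sq]
      gcongr
    · induction m, h using Nat.le_induction with
      | base => simp [sq]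
      | succ m h ih =>
        rw [sum_Ioc_succ_top (by omega)]
        push_cast
        nlinarith [(Nat.cast_nonneg T : (0 : ℝ) ≤ T)]
  have hM0 : 0 ≤ M := by simpa using hM 0
  set n := T + ∑ x ∈ X, r x with hn
  have hr : ∀ x ∈ X, r x ≤ n := fun x hx =>
    (single_le_sum (f := r) (fun _ _ => Nat.zero_le _) hx).trans (by omega)
  have htail : ∑ x ∈ X, ∑ τ ∈ Ioc T (r x), 2 * (τ : ℝ) ≤ 2 * M / T := by
    calc ∑ x ∈ X, ∑ τ ∈ Ioc T (r x), 2 * (τ : ℝ)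
        = ∑ x ∈ X, ∑ τ ∈ Ioc T n with τ ≤ r x, 2 * (τ : ℝ) := by
          refine sum_congr rfl fun x hx => sum_congr ?_ fun _ _ => rfl
          ext τ
          have := hr x hx
          simp only [mem_Ioc, mem_filter]
          omega
      _ = ∑ τ ∈ Ioc T n, 2 * (τ : ℝ) * #{x ∈ X | τ ≤ r x} := sum_sum_indicator_le _ _ _ _
      _ ≤ ∑ τ ∈ Ioc T n, 2 * M * ((τ : ℝ) ^ 2)⁻¹ := by
          refine sum_le_sum fun τ hτ => ?_
          have hpos : (0 : ℝ) < τ := by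
            have := (mem_Ioc.1 hτ).1
            exact_mod_cast (Nat.zero_le T).trans_lt this
          have := hM τ
          rw [← div_eq_mul_inv, le_div_iff₀ (by positivity)]
          linarith
      _ ≤ 2 * M * (T : ℝ)⁻¹ := by
          rw [← mul_sum]
          gcongr
          exact (sum_Ioc_inv_sq_le_sub (by omega) (by omega)).trans (by simp)
      _ = _ := by rw [div_eq_mul_inv]
  calc ∑ x ∈ X, (r x : ℝ) ^ 2
      ≤ ∑ x ∈ X, (T * (r x : ℝ) + ∑ τ ∈ Ioc T (r x), 2 * (τ : ℝ)) := sum_le_sum fun x _ => hsq _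
    _ ≤ _ := by
        rw [sum_add_distrib, ← mul_sum]
        gcongr

theorem card_sq_le_card_mul_card_collisions {α β : Type*} [DecidableEq α] [DecidableEq β]
    {S : Finset α} {W : Finset β} {φ : α → β} (hφ : ∀ x ∈ S, φ x ∈ W) :
    #S ^ 2 ≤ #W * #{p ∈ S ×ˢ S | φ p.1 = φ p.2} := by
  have h : #{p ∈ S ×ˢ S | φ p.1 = φ p.2} = ∑ w ∈ W, #{x ∈ S | φ x = w} ^ 2 := by
    rw [card_eq_sum_card_fiberwise (t := W) (f := fun p => φ p.1) fun p hp =>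
      hφ _ (mem_product.1 (mem_filter.1 hp).1).1]
    refine sum_congr rfl fun w _ => ?_
    rw [sq, ← card_product]
    congr 1
    ext p
    simp only [mem_filter, mem_product]
    grind
  rw [h, card_eq_sum_card_fiberwise hφ]
  exact sq_sum_le_card_mul_sum_sq

theorem card_sum_popular_differences {A : Finset ℝ} :
    #A ^ 2 ≤ 2 * ∑ s ∈ A - A with #A ^ 2 ≤ 2 * #(A - A) * dlt A A s, dlt A A s := by
  have h := sum_dlt A A
  rw [← sum_filter_add_sum_filter_not _ fun s => #A ^ 2 ≤ 2 * #(A - A) * dlt A A s] at h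
  rcases A.eq_empty_or_nonempty with rfl | hA
  · simp
  have hD : 0 < #(A - A) := (hA.sub hA).card_pos
  set N := {s ∈ A - A | ¬ #A ^ 2 ≤ 2 * #(A - A) * dlt A A s}
  have h1 : 2 * #(A - A) * ∑ s ∈ N, dlt A A s ≤ #(A - A) * #A ^ 2 := by
    rw [mul_sum]
    refine (sum_le_card_nsmul N _ (#A ^ 2) fun s hs => ?_).trans
      (Nat.mul_le_mul_right _ (card_filter_le _ _))
    exact (not_le.1 (mem_filter.1 hs).2).le
  have h2 : 2 * ∑ s ∈ N, dlt A A s ≤ #A ^ 2 :=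
    Nat.le_of_mul_le_mul_left (by linarith) hD
  nlinarith

/-- Collisions `a - u = a' - u'` with `u, u' ∈ A ∩ (A + s)`, summed over `s`, are controlled by the
third moment energy. -/
theorem popular_sq_le (A P : Finset ℝ) :
    (∑ s ∈ P, #A * dlt A A s) ^ 2 ≤
      (∑ s ∈ P, dlt (A - A) (A - A) s) * ∑ x ∈ A - A, dlt A A x ^ 3 := by
  set S := P.sigma fun s => A ×ˢ {u ∈ A | u - s ∈ A} with hS
  set W := P.sigma fun s => {d ∈ A - A | s + d ∈ A - A} with hW
  have hScard : #S = ∑ s ∈ P, #A * dlt A A s := by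
    simp only [hS, card_sigma, card_product, dlt_eq_card_filter_left]
  have hWcard : #W = ∑ s ∈ P, dlt (A - A) (A - A) s := by
    simp only [hW, card_sigma, dlt_eq_card_filter_right]
  set φ : (_ : ℝ) × ℝ × ℝ → (_ : ℝ) × ℝ := fun z => ⟨z.1, z.2.1 - z.2.2⟩ with hφ
  have hφW : ∀ z ∈ S, φ z ∈ W := by
    rintro ⟨s, a, u⟩ hz
    simp only [hS, hW, hφ, mem_sigma, mem_product, mem_filter] at hz ⊢
    refine ⟨hz.1, sub_mem_sub hz.2.1 hz.2.2.1, ?_⟩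
    rw [show s + (a - u) = a - (u - s) by ring]
    exact sub_mem_sub hz.2.1 hz.2.2.2
  rw [← hScard, ← hWcard]
  refine (card_sq_le_card_mul_card_collisions hφW).trans (Nat.mul_le_mul_left _ ?_)
  have hcube : ∑ x ∈ A - A, dlt A A x ^ 3 = #((A - A).sigma fun x =>
      {p ∈ A ×ˢ A | p.1 - p.2 = x} ×ˢ {p ∈ A ×ˢ A | p.1 - p.2 = x} ×ˢ
        {p ∈ A ×ˢ A | p.1 - p.2 = x}) := by
    simp only [card_sigma, card_product, dlt]
    exact sum_congr rfl fun x _ => by ring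
  rw [hcube]
  refine card_le_card_of_injOn (fun z => ⟨z.1.2.1 - z.2.2.1, (z.1.2.1, z.2.2.1),
    (z.1.2.2, z.2.2.2), (z.1.2.2 - z.1.1, z.2.2.2 - z.2.1)⟩) ?_ ?_
  · rintro ⟨⟨s, a, u⟩, ⟨s', a', u'⟩⟩ hz
    simp only [hS, hφ, mem_coe, mem_filter, mem_product, mem_sigma, Sigma.mk.injEq,
      heq_eq_eq] at hz ⊢
    obtain ⟨⟨⟨-, ha, hu, hus⟩, -, ha', hu', hus'⟩, rfl, h⟩ := hz
    exact ⟨sub_mem_sub ha ha', ⟨⟨ha, ha'⟩, trivial⟩, ⟨⟨hu, hu'⟩, by linarith⟩,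
      ⟨hus, hus'⟩, by linarith⟩
  · rintro ⟨⟨s, a, u⟩, ⟨s', a', u'⟩⟩ - ⟨⟨t, b, v⟩, ⟨t', b', v'⟩⟩ - h
    simp only [Sigma.mk.injEq, heq_eq_eq, Prod.mk.injEq] at h ⊢
    obtain ⟨-, ⟨rfl, rfl⟩, ⟨rfl, rfl⟩, h1, h2⟩ := h
    simp only [and_self, and_true]
    exact ⟨by linarith, by linarith⟩

theorem sum_dlt_mul_dlt_le (A D P : Finset ℝ) :
    ∑ s ∈ P, dlt A A s * dlt D D s ≤ ∑ x ∈ A - D, dlt A D x ^ 2 := by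
  have h1 : ∑ s ∈ P, dlt A A s * dlt D D s =
      #(P.sigma fun s => {p ∈ A ×ˢ A | p.1 - p.2 = s} ×ˢ {p ∈ D ×ˢ D | p.1 - p.2 = s}) := by
    simp only [card_sigma, card_product, dlt]
  have h2 : ∑ x ∈ A - D, dlt A D x ^ 2 = #((A - D).sigma fun x =>
      {p ∈ A ×ˢ D | p.1 - p.2 = x} ×ˢ {p ∈ A ×ˢ D | p.1 - p.2 = x}) := by
    simp only [card_sigma, card_product, dlt, sq]
  rw [h1, h2]
  refine card_le_card_of_injOn (fun z => ⟨z.2.1.1 - z.2.2.1, (z.2.1.1, z.2.2.1),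
    (z.2.1.2, z.2.2.2)⟩) ?_ ?_
  · rintro ⟨s, ⟨a, a'⟩, ⟨d, d'⟩⟩ hz
    simp only [mem_coe, mem_filter, mem_product, mem_sigma] at hz ⊢
    obtain ⟨-, ⟨⟨ha, ha'⟩, h⟩, ⟨hd, hd'⟩, h'⟩ := hz
    exact ⟨sub_mem_sub ha hd, ⟨⟨ha, hd⟩, trivial⟩, ⟨ha', hd'⟩, by linarith⟩
  · rintro ⟨s, ⟨a, a'⟩, ⟨d, d'⟩⟩ hz ⟨t, ⟨b, b'⟩, ⟨e, e'⟩⟩ hw h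
    simp only [mem_coe, mem_filter, mem_product, mem_sigma] at hz hw
    simp only [Sigma.mk.injEq, heq_eq_eq, Prod.mk.injEq] at h ⊢
    obtain ⟨-, ⟨rfl, rfl⟩, rfl, rfl⟩ := h
    exact ⟨hz.2.1.2.symm.trans hw.2.1.2, ⟨rfl, rfl⟩, rfl, rfl⟩

/-- The energy inequality behind the sum-product estimate. -/
theorem card_pow_eight_le (A : Finset ℝ) :
    #A ^ 8 ≤ 8 * #(A - A) * (∑ x ∈ A - (A - A), dlt A (A - A) x ^ 2) *
      ∑ x ∈ A - A, dlt A A x ^ 3 := by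
  set D := A - A
  set P := {s ∈ D | #A ^ 2 ≤ 2 * #D * dlt A A s}
  set E₃ := ∑ x ∈ D, dlt A A x ^ 3
  have h1 : #A ^ 2 ≤ 2 * ∑ s ∈ P, dlt A A s := card_sum_popular_differences
  have h2 : (#A * ∑ s ∈ P, dlt A A s) ^ 2 ≤ (∑ s ∈ P, dlt D D s) * E₃ := by
    rw [mul_sum]
    exact popular_sq_le A P
  have h3 : #A ^ 2 * ∑ s ∈ P, dlt D D s ≤ 2 * #D * ∑ x ∈ A - D, dlt A D x ^ 2 := by
    refine le_trans ?_ (Nat.mul_le_mul_left _ (sum_dlt_mul_dlt_le A D P))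
    rw [mul_sum, mul_sum]
    refine sum_le_sum fun s hs => ?_
    rw [← mul_assoc]
    exact Nat.mul_le_mul_right _ (mem_filter.1 hs).2
  calc #A ^ 8 = #A ^ 4 * (#A ^ 2) ^ 2 := by ring
    _ ≤ #A ^ 4 * (2 * ∑ s ∈ P, dlt A A s) ^ 2 := by gcongr
    _ = 4 * #A ^ 2 * (#A * ∑ s ∈ P, dlt A A s) ^ 2 := by ring
    _ ≤ 4 * #A ^ 2 * ((∑ s ∈ P, dlt D D s) * E₃) := by gcongr
    _ = 4 * (#A ^ 2 * ∑ s ∈ P, dlt D D s) * E₃ := by ring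
    _ ≤ 4 * (2 * #D * ∑ x ∈ A - D, dlt A D x ^ 2) * E₃ := by gcongr
    _ = _ := by ring

theorem StrictConvexOn.card_popular_mul_le {f : ℝ → ℝ} (hf : StrictConvexOn ℝ Set.univ f)
    {A : Finset ℝ} (hA : A.Nonempty) (B : Finset ℝ) (τ : ℕ) :
    (#{x ∈ A - B | τ ≤ dlt A B x} : ℝ) * τ ^ 3 ≤
      4096 * (#(A.image f + A.image f) * #B : ℝ) ^ 2 / #A := by
  have hn : (0 : ℝ) < #A := by exact_mod_cast hA.card_pos
  rw [le_div_iff₀ hn]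
  have h := hf.card_popular_le (B := B) hA (hA.image f) (τ := τ)
  have h' : #{x ∈ A - B | τ ≤ dlt A B x} * τ ^ 3 * #A ≤
      4096 * (#(A.image f + A.image f) * #B) ^ 2 :=
    calc _ ≤ #{x ∈ A - B | τ ≤ dlt A B x} * τ ^ 3 * (2 * #(A.image f)) :=
          Nat.mul_le_mul_left _ (hf.card_le_two_mul_card_image A)
      _ ≤ _ := by linarith
  exact_mod_cast h'

theorem StrictConvexOn.sum_dlt_cube_le {f : ℝ → ℝ} (hf : StrictConvexOn ℝ Set.univ f)
    {A : Finset ℝ} (hA : 2 ≤ #A) :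
    ∑ x ∈ A - A, (dlt A A x : ℝ) ^ 3 ≤
      36864 * (#(A.image f + A.image f) : ℝ) ^ 2 * #A * Real.log #A := by
  have hne : A.Nonempty := card_pos.1 (by omega)
  have hn : (2 : ℝ) ≤ #A := by exact_mod_cast hA
  have hlog : 1 + Real.log #A ≤ 3 * Real.log #A := by
    linarith [Real.log_two_gt_d9, Real.log_le_log two_pos hn]
  have h := sum_cube_le_of_card_le (A - A) (dlt A A) (fun x _ => dlt_le_card_left A A x)
    (hf.card_popular_mul_le hne A)
  refine h.trans ?_
  calc _ ≤ 3 * (4096 * (#(A.image f + A.image f) * #A : ℝ) ^ 2 / #A) * (3 * Real.log #A) := by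
        gcongr
    _ = _ := by
        field_simp
        ring

theorem StrictConvexOn.sum_dlt_sq_le {f : ℝ → ℝ} (hf : StrictConvexOn ℝ Set.univ f)
    {A D : Finset ℝ} (hA : A.Nonempty) (hD : D.Nonempty) :
    ∑ x ∈ A - D, (dlt A D x : ℝ) ^ 2 ≤
      8195 * #(A.image f + A.image f) * #D * √(#D : ℝ) := by
  have hn : (0 : ℝ) < #A := by exact_mod_cast hA.card_pos
  have hd : (1 : ℝ) ≤ √(#D : ℝ) := Real.one_le_sqrt.2 (by exact_mod_cast hD.card_pos)
  have hF : (#A : ℝ) ≤ 2 * #(A.image f + A.image f) := by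
    exact_mod_cast (hf.card_le_two_mul_card_image A).trans
      (Nat.mul_le_mul_left _ (card_le_card_add_right (hA.image f)))
  have hsum : ∑ x ∈ A - D, (dlt A D x : ℝ) = #A * #D := by exact_mod_cast sum_dlt A D
  have hmoment := fun T (hT : 1 ≤ T) => sum_sq_le_of_card_le (A - D) (dlt A D)
    (hf.card_popular_mul_le hA D) (T := T) hT
  set F : ℝ := ((#(A.image f + A.image f) : ℕ) : ℝ)
  have hsq : √(#D : ℝ) ^ 2 = #D := Real.sq_sqrt (Nat.cast_nonneg _)
  set r := √(#D : ℝ)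
  have hF0 : 0 < F := by linarith
  have ht : 0 < F * r / #A := by positivity
  have ht' : 1 ≤ 2 * (F * r / #A) := by
    rw [← mul_div_assoc, one_le_div hn]
    nlinarith
  have hT : 1 ≤ ⌈F * r / #A⌉₊ := Nat.ceil_pos.2 ht
  have hT1 : F * r / #A ≤ (⌈F * r / #A⌉₊ : ℝ) := Nat.le_ceil _
  have hT2 : (⌈F * r / #A⌉₊ : ℝ) ≤ 3 * (F * r / #A) := by
    linarith [Nat.ceil_lt_add_one ht.le]
  have h := hmoment _ hT
  rw [hsum] at h
  calc _ ≤ _ := h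
    _ ≤ 3 * (F * r / #A) * (#A * #D) + 2 * (4096 * (F * #D) ^ 2 / #A) / (F * r / #A) := by gcongr
    _ = 8195 * F * #D * r := by
        rw [← hsq]
        field_simp
        ring

theorem StrictConvexOn.card_pow_fourteen_le {f : ℝ → ℝ} (hf : StrictConvexOn ℝ Set.univ f)
    {A : Finset ℝ} (hA : 2 ≤ #A) :
    (#A : ℝ) ^ 14 ≤ (8 * 8195 * 36864) ^ 2 * (#(A.image f + A.image f) : ℝ) ^ 6 *
      (#(A - A) : ℝ) ^ 5 * Real.log #A ^ 2 := by
  have hne : A.Nonempty := card_pos.1 (by omega)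
  have hn : (0 : ℝ) < #A := by exact_mod_cast hne.card_pos
  have h8 : (#A : ℝ) ^ 8 ≤ 8 * #(A - A) * (∑ x ∈ A - (A - A), (dlt A (A - A) x : ℝ) ^ 2) *
      ∑ x ∈ A - A, (dlt A A x : ℝ) ^ 3 := by exact_mod_cast card_pow_eight_le A
  have h3 := hf.sum_dlt_cube_le hA
  have h2 := hf.sum_dlt_sq_le hne (hne.sub hne)
  have hsq : √(#(A - A) : ℝ) ^ 2 = #(A - A) := Real.sq_sqrt (Nat.cast_nonneg _)
  set F : ℝ := ((#(A.image f + A.image f) : ℕ) : ℝ)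
  set d : ℝ := ((#(A - A) : ℕ) : ℝ)
  set L := Real.log #A
  have h7 : (#A : ℝ) ^ 7 ≤ 8 * 8195 * 36864 * F ^ 3 * d ^ 2 * √d * L := by
    refine le_of_mul_le_mul_right ?_ hn
    calc (#A : ℝ) ^ 7 * #A = #A ^ 8 := by ring
      _ ≤ 8 * d * (8195 * F * d * √d) * (36864 * F ^ 2 * #A * L) := h8.trans (by gcongr)
      _ = _ := by ring
  calc (#A : ℝ) ^ 14 = (#A ^ 7) ^ 2 := by ring
    _ ≤ (8 * 8195 * 36864 * F ^ 3 * d ^ 2 * √d * L) ^ 2 := by gcongr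
    _ = (8 * 8195 * 36864) ^ 2 * F ^ 6 * (d ^ 4 * √d ^ 2) * L ^ 2 := by ring
    _ = _ := by
        rw [hsq]
        ring

theorem stmt12 : ∃ K : ℝ, 0 < K ∧
    ∀ f : ℝ → ℝ, Continuous f → StrictConvexOn ℝ Set.univ f →
    ∀ A : Finset ℝ, 2 ≤ A.card →
    max ((A.image f + A.image f).card : ℝ) ((A - A).card : ℝ) ≥
      K * (A.card : ℝ) ^ ((14 : ℝ) / 11) / (Real.log A.card) ^ ((2 : ℝ) / 11) := by
  have hpow : ∀ {x : ℝ} (k : ℕ), 0 ≤ x → (x ^ ((k : ℝ) / 11)) ^ 11 = x ^ k := fun k hx => by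
    rw [← Real.rpow_mul_natCast hx, Nat.cast_ofNat, div_mul_cancel₀ _ (by norm_num),
      Real.rpow_natCast]
  refine ⟨((8 * 8195 * 36864 : ℝ)⁻¹) ^ ((2 : ℝ) / 11), by positivity, fun f _ hf A hA => ?_⟩
  have hn : (1 : ℝ) < #A := by exact_mod_cast hA
  have hL : 0 < Real.log #A := Real.log_pos hn
  have h := hf.card_pow_fourteen_le hA
  refine le_of_pow_le_pow_left₀ (n := 11) (by norm_num) (by positivity) ?_
  have h14 := hpow (x := (#A : ℝ)) 14 (by positivity)
  have h2 := hpow 2 hL.le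
  have hK := hpow (x := (8 * 8195 * 36864 : ℝ)⁻¹) 2 (by positivity)
  rw [Nat.cast_ofNat] at h14 h2 hK
  rw [div_pow, mul_pow, h14, h2, hK, div_le_iff₀ (by positivity), inv_pow,
    inv_mul_le_iff₀ (by positivity)]
  set M := max (#(A.image f + A.image f) : ℝ) (#(A - A) : ℝ)
  calc (#A : ℝ) ^ 14 ≤ _ := h
    _ ≤ (8 * 8195 * 36864) ^ 2 * M ^ 6 * M ^ 5 * Real.log #A ^ 2 := by
        gcongr
        exacts [le_max_left _ _, le_max_right _ _]
    _ = _ := by ring
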